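/- Let f : ℝ^{n×m} → ℝ be differentiable with ∇f Lipschitz continuous with constant L with respect to the Frobenius norm. Let X* ∈ ℝ^{n×m} be a rank-r matrix with ∇f(X*) = 0, with singular value decomposition X* = ΦΣΨᵀ (Φ ∈ ℝ^{n×r}, Ψ ∈ ℝ^{m×r} with orthonormal columns, Σ positive diagonal), and set U* = ΦΣ^{1/2}R₀, V* = ΨΣ^{1/2}R₀ for some orthogonal R₀ ∈ O_r, and W* = [U*;V*]. Then for any U ∈ ℝ^{n×r}, V ∈ ℝ^{m×r} with W = [U;V], Ŵ = [U;−V], and X = UVᵀ: 2‖∇f(X)‖_F + (1/2)‖ŴᵀW‖_F ≤ (2L + 1/2)·(2‖W‖_F + dist(W,W*))·dist(W,W*). -/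

import Mathlib

/-!
Fix an orthogonal `R` and put `A = U* R`, `B = V* R`, `D = W - [A; B]`, `d = ‖D‖`. The
factorisation is orthogonally invariant and balanced: `A Bᵀ = X*` and `Aᵀ A = Bᵀ B`. Expanding
around `(U, V)`, both `U Vᵀ - A Bᵀ` (`fnorm_mul_transpose_sub_le`) and
`Ŵᵀ W = Uᵀ U - Vᵀ V` (`fnorm_balance_le`) consist of two terms linear in `D` and one quadratic in
`D`, so submultiplicativity of the Frobenius norm bounds each of them by `(2 ‖W‖ + d) d`. The
Lipschitz bound together with `∇f(X*) = 0` gives the estimate with `d` in place of `dist(W, W*)`,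
and since the right-hand side is continuous in `d`, it survives passing to the infimum over `R`.
-/

open scoped Matrix

attribute [local instance] Matrix.frobeniusNormedAddCommGroup Matrix.frobeniusNormedSpace

/-- The Frobenius inner product `⟨A, B⟩ = trace (Aᵀ B)`. -/
noncomputable def finner {ι κ : Type*} [Fintype ι] [Fintype κ]
    (A B : Matrix ι κ ℝ) : ℝ :=
  Matrix.trace (Aᵀ * B)

/-- The Frobenius norm. -/
noncomputable def fnorm {ι κ : Type*} [Fintype ι] [Fintype κ]
    (A : Matrix ι κ ℝ) : ℝ :=
  Real.sqrt (finner A A)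

/-- `dist(Z¹,Z²) = min_{R ∈ O_r} ‖Z¹ − Z²R‖_F`. -/
noncomputable def mdist {ι : Type*} [Fintype ι] {r : ℕ}
    (Z₁ Z₂ : Matrix ι (Fin r) ℝ) : ℝ :=
  ⨅ R : {R : Matrix (Fin r) (Fin r) ℝ // Rᵀ * R = 1},
    fnorm (Z₁ - Z₂ * (R : Matrix (Fin r) (Fin r) ℝ))

theorem fnorm_eq_norm {ι κ : Type*} [Fintype ι] [Fintype κ] (A : Matrix ι κ ℝ) :
    fnorm A = ‖A‖ := by
  rw [fnorm, Matrix.frobenius_norm_def, Real.sqrt_eq_rpow, finner, Matrix.trace,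
    Finset.sum_comm]
  congr 1
  refine Finset.sum_congr rfl fun i _ => ?_
  simp [Matrix.mul_apply, pow_two]

theorem finner_fromRows {ι ι' κ : Type*} [Fintype ι] [Fintype ι'] [Fintype κ]
    (A : Matrix ι κ ℝ) (B : Matrix ι' κ ℝ) :
    finner (Matrix.fromRows A B) (Matrix.fromRows A B) = finner A A + finner B B := by
  simp [finner, Matrix.transpose_fromRows, Matrix.fromCols_mul_fromRows, Matrix.trace_add]

theorem finner_self_nonneg {ι κ : Type*} [Fintype ι] [Fintype κ] (A : Matrix ι κ ℝ) :
    0 ≤ finner A A := by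
  simp only [finner, Matrix.trace, Matrix.diag, Matrix.mul_apply, Matrix.transpose_apply]
  exact Finset.sum_nonneg fun i _ => Finset.sum_nonneg fun j _ => mul_self_nonneg _

theorem norm_le_fromRows_left {ι ι' κ : Type*} [Fintype ι] [Fintype ι'] [Fintype κ]
    (A : Matrix ι κ ℝ) (B : Matrix ι' κ ℝ) : ‖A‖ ≤ ‖Matrix.fromRows A B‖ := by
  rw [← fnorm_eq_norm, ← fnorm_eq_norm]
  refine Real.sqrt_le_sqrt ?_
  rw [finner_fromRows]
  linarith [finner_self_nonneg B]

theorem norm_le_fromRows_right {ι ι' κ : Type*} [Fintype ι] [Fintype ι'] [Fintype κ]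
    (A : Matrix ι κ ℝ) (B : Matrix ι' κ ℝ) : ‖B‖ ≤ ‖Matrix.fromRows A B‖ := by
  rw [← fnorm_eq_norm, ← fnorm_eq_norm]
  refine Real.sqrt_le_sqrt ?_
  rw [finner_fromRows]
  linarith [finner_self_nonneg A]

theorem norm_fromRows_neg {ι ι' κ : Type*} [Fintype ι] [Fintype ι'] [Fintype κ]
    (A : Matrix ι κ ℝ) (B : Matrix ι' κ ℝ) :
    ‖Matrix.fromRows A (-B)‖ = ‖Matrix.fromRows A B‖ := by
  rw [← fnorm_eq_norm, ← fnorm_eq_norm, fnorm, fnorm, finner_fromRows, finner_fromRows]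
  simp [finner]

theorem norm_add_sub_le {E : Type*} [SeminormedAddCommGroup E] {x y z : E} {w d : ℝ}
    (hx : ‖x‖ ≤ w * d) (hy : ‖y‖ ≤ w * d) (hz : ‖z‖ ≤ d * d) :
    ‖x + y - z‖ ≤ (2 * w + d) * d := by
  linarith [norm_sub_le (x + y) z, norm_add_le x y]

/-- With `E = U - A` and `F = V - B`, one has `U Vᵀ - A Bᵀ = E Vᵀ + U Fᵀ - E Fᵀ`. -/
theorem fnorm_mul_transpose_sub_le {n m r : ℕ} (U A : Matrix (Fin n) (Fin r) ℝ)
    (V B : Matrix (Fin m) (Fin r) ℝ) :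
    fnorm (U * Vᵀ - A * Bᵀ) ≤
      (2 * fnorm (Matrix.fromRows U V) + fnorm (Matrix.fromRows (U - A) (V - B)))
        * fnorm (Matrix.fromRows (U - A) (V - B)) := by
  simp only [fnorm_eq_norm]
  have key : U * Vᵀ - A * Bᵀ
      = (U - A) * Vᵀ + U * (V - B)ᵀ - (U - A) * (V - B)ᵀ := by
    simp only [Matrix.transpose_sub, Matrix.sub_mul, Matrix.mul_sub]
    abel
  have hE := norm_le_fromRows_left (U - A) (V - B)
  have hF := norm_le_fromRows_right (U - A) (V - B)
  have hU := norm_le_fromRows_left U V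
  have hV := norm_le_fromRows_right U V
  rw [key]
  refine norm_add_sub_le ?_ ?_ ?_
  · refine (Matrix.frobenius_norm_mul _ _).trans ?_
    rw [Matrix.frobenius_norm_transpose, mul_comm]
    gcongr
  · refine (Matrix.frobenius_norm_mul _ _).trans ?_
    rw [Matrix.frobenius_norm_transpose]
    gcongr
  · refine (Matrix.frobenius_norm_mul _ _).trans ?_
    rw [Matrix.frobenius_norm_transpose]
    gcongr

/-- With `D = [U - A; V - B]`, the balance condition `Aᵀ A = Bᵀ B` says that
`[A; -B]ᵀ [A; B] = 0`, hence `Ŵᵀ W = D̂ᵀ W + Ŵᵀ D - D̂ᵀ D`. -/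
theorem fnorm_balance_le {n m r : ℕ} (U A : Matrix (Fin n) (Fin r) ℝ)
    (V B : Matrix (Fin m) (Fin r) ℝ) (hAB : Aᵀ * A = Bᵀ * B) :
    fnorm ((Matrix.fromRows U (-V))ᵀ * Matrix.fromRows U V) ≤
      (2 * fnorm (Matrix.fromRows U V) + fnorm (Matrix.fromRows (U - A) (V - B)))
        * fnorm (Matrix.fromRows (U - A) (V - B)) := by
  simp only [fnorm_eq_norm]
  have key : (Matrix.fromRows U (-V))ᵀ * Matrix.fromRows U V
      = (Matrix.fromRows (U - A) (-(V - B)))ᵀ * Matrix.fromRows U V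
        + (Matrix.fromRows U (-V))ᵀ * Matrix.fromRows (U - A) (V - B)
        - (Matrix.fromRows (U - A) (-(V - B)))ᵀ * Matrix.fromRows (U - A) (V - B) := by
    simp only [Matrix.transpose_fromRows, Matrix.fromCols_mul_fromRows, Matrix.transpose_sub,
      Matrix.transpose_neg, Matrix.sub_mul, Matrix.mul_sub, Matrix.neg_mul, hAB]
    abel
  rw [key]
  refine norm_add_sub_le ?_ ?_ ?_
  all_goals
    refine (Matrix.frobenius_norm_mul _ _).trans ?_
    rw [Matrix.frobenius_norm_transpose, norm_fromRows_neg]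
  rw [mul_comm]

theorem stmt8 {n m r : ℕ}
    (f : Matrix (Fin n) (Fin m) ℝ → ℝ) (hdiff : Differentiable ℝ f)
    (gradf : Matrix (Fin n) (Fin m) ℝ → Matrix (Fin n) (Fin m) ℝ)
    (hgradf : ∀ X D, fderiv ℝ f X D = finner (gradf X) D)
    (L : ℝ) (hL : 0 ≤ L)
    (hLip : ∀ X Y : Matrix (Fin n) (Fin m) ℝ, fnorm (gradf X - gradf Y) ≤ L * fnorm (X - Y))
    (Xs : Matrix (Fin n) (Fin m) ℝ)
    (Φ : Matrix (Fin n) (Fin r) ℝ) (Ψ : Matrix (Fin m) (Fin r) ℝ)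
    (σ : Fin r → ℝ) (hσ : ∀ i, 0 < σ i)
    (hΦ : Φᵀ * Φ = 1) (hΨ : Ψᵀ * Ψ = 1)
    (hXs : Xs = Φ * Matrix.diagonal σ * Ψᵀ) (hrank : Xs.rank = r)
    (hcrit : gradf Xs = 0)
    (R₀ : Matrix (Fin r) (Fin r) ℝ) (hR₀ : R₀ᵀ * R₀ = 1)
    (Us : Matrix (Fin n) (Fin r) ℝ) (Vs : Matrix (Fin m) (Fin r) ℝ)
    (hUs : Us = Φ * Matrix.diagonal (fun i => Real.sqrt (σ i)) * R₀)
    (hVs : Vs = Ψ * Matrix.diagonal (fun i => Real.sqrt (σ i)) * R₀)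
    (U : Matrix (Fin n) (Fin r) ℝ) (V : Matrix (Fin m) (Fin r) ℝ) :
    2 * fnorm (gradf (U * Vᵀ))
        + (1 / 2) * fnorm ((Matrix.fromRows U (-V))ᵀ * Matrix.fromRows U V)
      ≤ (2 * L + 1 / 2)
          * (2 * fnorm (Matrix.fromRows U V)
              + mdist (Matrix.fromRows U V) (Matrix.fromRows Us Vs))
          * mdist (Matrix.fromRows U V) (Matrix.fromRows Us Vs) := by
  have horth : ∀ R : Matrix (Fin r) (Fin r) ℝ, Rᵀ * R = 1 → R * Rᵀ = 1 :=
    fun R hR => mul_eq_one_comm.mp hR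
  have hsq : Matrix.diagonal (fun i => Real.sqrt (σ i))
      * Matrix.diagonal (fun i => Real.sqrt (σ i)) = Matrix.diagonal σ := by
    rw [Matrix.diagonal_mul_diagonal]
    congr 1
    funext i
    exact Real.mul_self_sqrt (hσ i).le
  have hprod : Us * Vsᵀ = Xs := by
    rw [hUs, hVs, hXs, ← hsq]
    simp only [Matrix.transpose_mul, Matrix.diagonal_transpose, Matrix.mul_assoc]
    rw [← Matrix.mul_assoc R₀, horth R₀ hR₀, Matrix.one_mul]
  have hgram : ∀ {k : ℕ} (P : Matrix (Fin k) (Fin r) ℝ), Pᵀ * P = 1 →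
      (P * Matrix.diagonal (fun i => Real.sqrt (σ i)) * R₀)ᵀ
        * (P * Matrix.diagonal (fun i => Real.sqrt (σ i)) * R₀)
        = R₀ᵀ * Matrix.diagonal σ * R₀ := by
    intro k P hP
    rw [← hsq]
    simp only [Matrix.transpose_mul, Matrix.diagonal_transpose, Matrix.mul_assoc]
    rw [← Matrix.mul_assoc Pᵀ, hP, Matrix.one_mul]
  have hbal : Usᵀ * Us = Vsᵀ * Vs := by
    rw [hUs, hVs, hgram Φ hΦ, hgram Ψ hΨ]
  have hbound : ∀ R : {R : Matrix (Fin r) (Fin r) ℝ // Rᵀ * R = 1},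
      2 * fnorm (gradf (U * Vᵀ))
        + (1 / 2) * fnorm ((Matrix.fromRows U (-V))ᵀ * Matrix.fromRows U V)
      ≤ (2 * L + 1 / 2)
          * (2 * fnorm (Matrix.fromRows U V)
              + fnorm (Matrix.fromRows U V - Matrix.fromRows Us Vs * R.1))
          * fnorm (Matrix.fromRows U V - Matrix.fromRows Us Vs * R.1) := by
    rintro ⟨R, hR⟩
    have hD : Matrix.fromRows U V - Matrix.fromRows Us Vs * R
        = Matrix.fromRows (U - Us * R) (V - Vs * R) := by
      rw [Matrix.fromRows_mul]
      ext (i | i) j <;> simp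
    have hAB : Us * R * (Vs * R)ᵀ = Xs := by
      rw [← hprod, Matrix.transpose_mul, Matrix.mul_assoc, ← Matrix.mul_assoc R, horth R hR,
        Matrix.one_mul]
    have hbalR : (Us * R)ᵀ * (Us * R) = (Vs * R)ᵀ * (Vs * R) := by
      simp only [Matrix.transpose_mul, Matrix.mul_assoc]
      rw [← Matrix.mul_assoc Usᵀ, hbal, Matrix.mul_assoc]
    have h1 := fnorm_mul_transpose_sub_le U (Us * R) V (Vs * R)
    have h2 := fnorm_balance_le U (Us * R) V (Vs * R) hbalR
    have h3 := hLip (U * Vᵀ) Xs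
    rw [hcrit, sub_zero] at h3
    rw [hAB] at h1
    simp only [hD]
    have h4 := mul_le_mul_of_nonneg_left h1 hL
    linarith
  -- The infimum defining `mdist` is a limit of values `fnorm (W - W* R)`.
  have hne : (Set.range fun R : {R : Matrix (Fin r) (Fin r) ℝ // Rᵀ * R = 1} =>
      fnorm (Matrix.fromRows U V - Matrix.fromRows Us Vs * R.1)).Nonempty :=
    ⟨_, ⟨⟨1, by simp⟩, rfl⟩⟩
  have hbdd : BddBelow (Set.range fun R : {R : Matrix (Fin r) (Fin r) ℝ // Rᵀ * R = 1} =>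
      fnorm (Matrix.fromRows U V - Matrix.fromRows Us Vs * R.1)) :=
    ⟨0, by rintro _ ⟨R, rfl⟩; exact Real.sqrt_nonneg _⟩
  obtain ⟨u, -, hu, humem⟩ := exists_seq_tendsto_sInf hne hbdd
  have hlim : Filter.Tendsto u Filter.atTop
      (nhds (mdist (Matrix.fromRows U V) (Matrix.fromRows Us Vs))) := hu
  refine ge_of_tendsto' (((hlim.const_add _).const_mul _).mul hlim) fun k => ?_
  obtain ⟨R, hRk⟩ := humem k
  rw [← hRk]
  exact hbound R
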